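/- For every sufficiently large n, every n-vertex W₅-free simple graph attaining the maximum spectral radius among all n-vertex W₅-free graphs also attains the maximum number of edges among all n-vertex W₅-free graphs; that is, SPEX(n, W₅) ⊆ EX(n, W₅). -/

import Mathlib

/-- The wheel graph on `t` vertices: vertex `0` joined to every vertex of the
cycle `1, 2, …, t-1` (with `t-1` adjacent to `1`). -/
def wheelGraph (t : ℕ) : SimpleGraph (Fin t) where
  Adj a b := a ≠ b ∧ (a.val = 0 ∨ b.val = 0 ∨ a.val + 1 = b.val ∨ b.val + 1 = a.val ∨
      (a.val = 1 ∧ b.val = t - 1) ∨ (b.val = 1 ∧ a.val = t - 1))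
  symm := by
    constructor
    intro a b h
    exact ⟨h.1.symm, by tauto⟩
  loopless := by
    constructor
    intro a h
    exact h.1 rfl

/-- `G` contains a copy of `F`, i.e. a subgraph isomorphic to `F`. -/
def ContainsCopy {α β : Type*} (F : SimpleGraph α) (G : SimpleGraph β) : Prop :=
  ∃ f : α ↪ β, ∀ a b, F.Adj a b → G.Adj (f a) (f b)

/-- `G` is `W_t`-free: it contains no subgraph isomorphic to the wheel on `t` vertices. -/
def WheelFree (t : ℕ) {n : ℕ} (G : SimpleGraph (Fin n)) : Prop :=
  ¬ ContainsCopy (wheelGraph t) G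

/-- The spectral radius of `G`: the largest eigenvalue of its adjacency matrix. -/
noncomputable def lam1 {n : ℕ} (G : SimpleGraph (Fin n)) : ℝ := by
  classical
  exact sSup {μ : ℝ | Module.End.HasEigenvalue (Matrix.toLin' (G.adjMatrix ℝ)) μ}

/-- The number of edges of a graph on a finite vertex type. -/
noncomputable def edgeCount {V : Type*} [Fintype V] (G : SimpleGraph V) : ℕ := by
  classical
  exact G.edgeFinset.card

/-- The degree of a vertex. -/
noncomputable def deg {n : ℕ} (G : SimpleGraph (Fin n)) (v : Fin n) : ℕ := by
  classical
  exact G.degree v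

/-- The number of neighbours of `v` inside the set `A`. -/
noncomputable def degIn {n : ℕ} (G : SimpleGraph (Fin n)) (A : Finset (Fin n)) (v : Fin n) : ℕ := by
  classical
  exact (A.filter fun u => G.Adj v u).card

/-- The number of edges of `G` with one endpoint in `S` and the other outside `S`. -/
noncomputable def cutCount {n : ℕ} (G : SimpleGraph (Fin n)) (S : Finset (Fin n)) : ℕ := by
  classical
  exact ((Finset.univ : Finset (Fin n × Fin n)).filter
    fun p => G.Adj p.1 p.2 ∧ p.1 ∈ S ∧ p.2 ∉ S).card

/-- `(S, T)` is a maximum cut of `G`. -/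
def IsMaxCut {n : ℕ} (G : SimpleGraph (Fin n)) (S T : Finset (Fin n)) : Prop :=
  T = Sᶜ ∧ ∀ S' : Finset (Fin n), cutCount G S' ≤ cutCount G S

/-- `G` attains the maximum spectral radius among all `n`-vertex `W_t`-free graphs. -/
def IsSpexWheel (t : ℕ) {n : ℕ} (G : SimpleGraph (Fin n)) : Prop :=
  WheelFree t G ∧ ∀ H : SimpleGraph (Fin n), WheelFree t H → lam1 H ≤ lam1 G

/-- `G` attains the maximum number of edges among all `n`-vertex `W_t`-free graphs. -/
def IsExWheel (t : ℕ) {n : ℕ} (G : SimpleGraph (Fin n)) : Prop :=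
  WheelFree t G ∧ ∀ H : SimpleGraph (Fin n), WheelFree t H → edgeCount H ≤ edgeCount G


noncomputable def nb {n : ℕ} (G : SimpleGraph (Fin n)) (v : Fin n) : Finset (Fin n) := by
  classical
  exact Finset.univ.filter (fun u => G.Adj v u)

theorem mem_nb {n : ℕ} {G : SimpleGraph (Fin n)} {v u : Fin n} : u ∈ nb G v ↔ G.Adj v u := by
  simp [nb]

theorem edgeCount_eq {n : ℕ} (G : SimpleGraph (Fin n)) :
    2 * edgeCount G = ∑ v, (nb G v).card := by
  classical
  have h := G.sum_degrees_eq_twice_card_edges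
  unfold edgeCount
  rw [← h]
  refine Finset.sum_congr rfl fun v _ => ?_
  rw [← SimpleGraph.card_neighborFinset_eq_degree]
  congr 1
  ext u
  simp [nb]

open Matrix in
theorem spec {n : ℕ} (hn : 0 < n) (G : SimpleGraph (Fin n)) :
    ∃ x : Fin n → ℝ, (∀ i, 0 ≤ x i) ∧ (∃ i, x i = 1) ∧ (∀ i, x i ≤ 1) ∧
      (∀ i, ∑ j ∈ nb G i, x j = lam1 G * x i) ∧
      ∀ y : Fin n → ℝ, ∑ i, ∑ j ∈ nb G i, y i * y j ≤ lam1 G * ∑ i, y i ^ 2 := by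
  classical
  have : Nonempty (Fin n) := ⟨⟨0, hn⟩⟩
  set A := G.adjMatrix ℝ with hA
  have hmv : ∀ y i, (A *ᵥ y) i = ∑ j ∈ nb G i, y j := by
    intro y i
    rw [hA, SimpleGraph.adjMatrix_mulVec_apply]
    refine Finset.sum_congr ?_ fun _ _ => rfl
    ext u; simp [nb]
  have hQ : ∀ y, y ⬝ᵥ (A *ᵥ y) = ∑ i, ∑ j ∈ nb G i, y i * y j := by
    intro y
    simp only [dotProduct, hmv, Finset.mul_sum]
  have hsq : ∀ y : Fin n → ℝ, y ⬝ᵥ y = ∑ i, y i ^ 2 := by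
    intro y; simp [dotProduct, sq]
  let K : Set (Fin n → ℝ) := {y | y ⬝ᵥ y = 1}
  have hKc : IsCompact K := by
    refine IsCompact.of_isClosed_subset (isCompact_univ_pi (fun _ : Fin n => isCompact_Icc (a := (-1:ℝ)) (b := 1))) ?_ ?_
    · exact isClosed_eq (by fun_prop) continuous_const
    · intro y hy i _
      have h1 : y i ^ 2 ≤ 1 := by
        have : y ⬝ᵥ y = 1 := hy
        rw [← this, hsq]
        exact Finset.single_le_sum (f := fun i => y i ^ 2) (fun i _ => sq_nonneg _) (Finset.mem_univ i)
      exact ⟨by nlinarith, by nlinarith⟩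
  have hKn : K.Nonempty := ⟨Pi.single ⟨0, hn⟩ 1, by simp [K]⟩
  obtain ⟨y0, hy0, hmax⟩ := hKc.exists_isMaxOn hKn (f := fun y => y ⬝ᵥ (A *ᵥ y)) (by fun_prop)
  set μ := y0 ⬝ᵥ (A *ᵥ y0) with hμ
  have hR : ∀ y, y ⬝ᵥ (A *ᵥ y) ≤ μ * (y ⬝ᵥ y) := by
    intro y
    by_cases h0 : y = 0
    · simp [h0]
    have hp : 0 < y ⬝ᵥ y := by
      rw [hsq]
      obtain ⟨i, hi⟩ := Function.ne_iff.mp h0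
      exact Finset.sum_pos' (fun i _ => sq_nonneg _) ⟨i, Finset.mem_univ i, sq_pos_of_ne_zero hi⟩
    set c := Real.sqrt (y ⬝ᵥ y) with hc
    have hcp : 0 < c := Real.sqrt_pos.mpr hp
    have hcc : c * c = y ⬝ᵥ y := Real.mul_self_sqrt hp.le
    have hm : c⁻¹ • y ∈ K := by
      change (c⁻¹ • y) ⬝ᵥ (c⁻¹ • y) = 1
      rw [smul_dotProduct, dotProduct_smul, ← hcc]
      simp only [smul_eq_mul]
      field_simp
    have h1 := hmax hm
    simp only [Set.mem_ofPred_eq, mulVec_smul, smul_dotProduct, dotProduct_smul, smul_eq_mul] at h1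
    rw [← hcc]
    have h2 : y ⬝ᵥ (A *ᵥ y) = c * c * (c⁻¹ * (c⁻¹ * (y ⬝ᵥ (A *ᵥ y)))) := by field_simp
    rw [h2]
    nlinarith [mul_pos hcp hcp]
  let w : Fin n → ℝ := fun i => |y0 i|
  have hw1 : w ⬝ᵥ w = 1 := by
    have : y0 ⬝ᵥ y0 = 1 := hy0
    rw [← this, hsq, hsq]; simp [w]
  have hw2 : w ⬝ᵥ (A *ᵥ w) = μ := by
    apply le_antisymm
    · have := hR w; rw [hw1] at this; linarith
    · rw [hμ, hQ, hQ]
      refine Finset.sum_le_sum fun i _ => Finset.sum_le_sum fun j _ => ?_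
      simp only [w]
      rw [← abs_mul]; exact le_abs_self _
  have hsymm : A.IsSymm := G.isSymm_adjMatrix
  have hps : (μ • (1 : Matrix (Fin n) (Fin n) ℝ) - A).PosSemidef := by
    refine Matrix.PosSemidef.of_dotProduct_mulVec_nonneg ?_ ?_
    · apply Matrix.IsHermitian.sub
      · unfold Matrix.IsHermitian; simp
      · unfold Matrix.IsHermitian; simpa using hsymm.eq
    · intro y
      have := hR y
      simp only [star_trivial, sub_mulVec, smul_mulVec, one_mulVec, dotProduct_sub, dotProduct_smul, smul_eq_mul]
      linarith
  have hev : A *ᵥ w = μ • w := by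
    have := (hps.dotProduct_mulVec_zero_iff w).1 (by
      simp only [star_trivial, sub_mulVec, smul_mulVec, one_mulVec, dotProduct_sub, dotProduct_smul, smul_eq_mul]
      rw [hw1, hw2]; ring)
    simp only [sub_mulVec, smul_mulVec, one_mulVec] at this
    exact (sub_eq_zero.1 this).symm
  have hw0 : w ≠ 0 := by rintro h; rw [h] at hw1; simp at hw1
  have hlam : lam1 G = μ := by
    unfold lam1
    refine IsGreatest.csSup_eq ⟨?_, ?_⟩
    · refine Module.End.hasEigenvalue_of_hasEigenvector (x := w) ⟨?_, hw0⟩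
      rw [Module.End.mem_eigenspace_iff]
      simpa using hev
    · intro ν hν
      obtain ⟨v, hv⟩ := hν.exists_hasEigenvector
      have h1 : A *ᵥ v = ν • v := by simpa using hv.apply_eq_smul
      have h2 := hR v
      rw [h1, dotProduct_smul, smul_eq_mul] at h2
      have hp : 0 < v ⬝ᵥ v := by
        rw [hsq]
        obtain ⟨i, hi⟩ := Function.ne_iff.mp hv.2
        exact Finset.sum_pos' (fun i _ => sq_nonneg _) ⟨i, Finset.mem_univ i, sq_pos_of_ne_zero hi⟩
      exact le_of_mul_le_mul_right h2 hp
  obtain ⟨z, -, hz⟩ := Finset.exists_max_image Finset.univ w Finset.univ_nonempty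
  have hwn : ∀ i, 0 ≤ w i := fun i => abs_nonneg _
  have hzp : 0 < w z := by
    rcases (hwn z).eq_or_lt with h | h
    · exfalso; apply hw0; funext i
      exact le_antisymm ((hz i (Finset.mem_univ i)).trans_eq h.symm) (hwn i)
    · exact h
  refine ⟨fun i => w i / w z, fun i => div_nonneg (hwn i) hzp.le, ⟨z, div_self hzp.ne'⟩, ?_, ?_, ?_⟩
  · intro i; exact (div_le_one hzp).2 (hz i (Finset.mem_univ i))
  · intro i
    have := congrFun hev i
    rw [hmv] at this
    rw [← Finset.sum_div, this, hlam]
    simp; ring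
  · intro y
    rw [← hQ, ← hsq, hlam]; exact hR y

theorem wheel_elim {n : ℕ} {G : SimpleGraph (Fin n)} (hG : WheelFree 5 G)
    {h a b c d : Fin n} (ha : G.Adj h a) (hb : G.Adj h b) (hc : G.Adj h c) (hd : G.Adj h d)
    (hab : G.Adj a b) (hbc : G.Adj b c) (hcd : G.Adj c d) (hda : G.Adj d a)
    (hac : a ≠ c) (hbd : b ≠ d) : False := by
  apply hG
  have n1 := ha.ne
  have n2 := hb.ne
  have n3 := hc.ne
  have n4 := hd.ne
  have n5 := hab.ne
  have n6 := hbc.ne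
  have n7 := hcd.ne
  have n8 := hda.ne
  refine ⟨⟨![h, a, b, c, d], ?_⟩, ?_⟩
  · intro i j hij
    fin_cases i <;> fin_cases j <;> simp_all
  · intro i j hij
    fin_cases i <;> fin_cases j <;>
      first
      | exact ha | exact hb | exact hc | exact hd | exact hab | exact hbc | exact hcd | exact hda
      | exact ha.symm | exact hb.symm | exact hc.symm | exact hd.symm
      | exact hab.symm | exact hbc.symm | exact hcd.symm | exact hda.symm
      | (exfalso; simp [wheelGraph] at hij)

theorem wheel_intro {n : ℕ} {G : SimpleGraph (Fin n)}
    (H : ∀ h a b c d : Fin n, G.Adj h a → G.Adj h b → G.Adj h c → G.Adj h d →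
      G.Adj a b → G.Adj b c → G.Adj c d → G.Adj d a → a ≠ c → b ≠ d → False) :
    WheelFree 5 G := by
  rintro ⟨f, hf⟩
  refine H (f 0) (f 1) (f 2) (f 3) (f 4) (hf _ _ ?_) (hf _ _ ?_) (hf _ _ ?_) (hf _ _ ?_)
    (hf _ _ ?_) (hf _ _ ?_) (hf _ _ ?_) (hf _ _ ?_) (f.injective.ne ?_) (f.injective.ne ?_) <;>
    simp [wheelGraph]

/-- every vertex has at most one neighbour in its own part -/
def Paired {n : ℕ} (G : SimpleGraph (Fin n)) (A : Finset (Fin n)) : Prop :=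
  ∀ u v w, (u ∈ A ↔ v ∈ A) → (u ∈ A ↔ w ∈ A) → G.Adj u v → G.Adj u w → v = w

theorem wheelFree_of_paired {n : ℕ} {G : SimpleGraph (Fin n)} {A : Finset (Fin n)}
    (hP : Paired G A) : WheelFree 5 G := by
  apply wheel_intro
  intro h a b c d ha hb hc hd hab hbc hcd hda hac hbd
  have q1 := hP h a b
  have q2 := hP h a c
  have q3 := hP h a d
  have q4 := hP h b c
  have q5 := hP h b d
  have q6 := hP h c d
  have p1 := hP a b d
  have p2 := hP b a c
  have p3 := hP c b d
  have p4 := hP d a c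
  have n5 := hab.ne
  have n6 := hbc.ne
  have n7 := hcd.ne
  have n8 := hda.ne
  have s1 := hab.symm
  have s2 := hbc.symm
  have s3 := hcd.symm
  have s4 := hda.symm
  by_cases m0 : h ∈ A <;> by_cases m1 : a ∈ A <;> by_cases m2 : b ∈ A <;>
    by_cases m3 : c ∈ A <;> by_cases m4 : d ∈ A <;> simp_all

/-- delete all edges at v and join v to S -/
def switch {n : ℕ} (G : SimpleGraph (Fin n)) (v : Fin n) (S : Finset (Fin n)) (hv : v ∉ S) :
    SimpleGraph (Fin n) where
  Adj a b := (a ≠ v ∧ b ≠ v ∧ G.Adj a b) ∨ (a = v ∧ b ∈ S) ∨ (b = v ∧ a ∈ S)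
  symm := by
    constructor
    intro a b h
    have := G.adj_comm a b
    grind
  loopless := by
    constructor
    intro a h
    have := G.irrefl (v := a)
    grind

theorem switch_free {n : ℕ} {G : SimpleGraph (Fin n)} (hG : WheelFree 5 G) (v : Fin n)
    (S : Finset (Fin n)) (hv : v ∉ S)
    (hS : ∀ u ∈ S, ∀ a ∈ S, ∀ b ∈ S, G.Adj u a → G.Adj u b → a = b) :
    WheelFree 5 (switch G v S hv) := by
  apply wheel_intro
  intro h a b c d ha hb hc hd hab hbc hcd hda hac hbd
  have key : ∀ u x y, (switch G v S hv).Adj u x → (switch G v S hv).Adj u y → u ∈ S → x ∈ S →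
      y ∈ S → x = y := by
    intro u x y h1 h2 hu hx hy
    have e1 : u ≠ v := fun e => hv (e ▸ hu)
    have e2 : x ≠ v := fun e => hv (e ▸ hx)
    have e3 : y ≠ v := fun e => hv (e ▸ hy)
    simp only [switch] at h1 h2
    refine hS u hu x hx y hy ?_ ?_ <;> tauto
  have nbv : ∀ x, (switch G v S hv).Adj v x → x ∈ S := by
    intro x h
    simp only [switch] at h
    tauto
  by_cases e0 : h = v
  · subst e0
    exact hbd (key a b d hab hda.symm (nbv _ ha) (nbv _ hb) (nbv _ hd))
  by_cases e1 : a = v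
  · subst e1
    exact hbd (key h b d hb hd (nbv _ ha.symm) (nbv _ hab) (nbv _ hda.symm))
  by_cases e2 : b = v
  · subst e2
    exact hac (key h a c ha hc (nbv _ hb.symm) (nbv _ hab.symm) (nbv _ hbc))
  by_cases e3 : c = v
  · subst e3
    exact hbd (key h b d hb hd (nbv _ hc.symm) (nbv _ hbc.symm) (nbv _ hcd))
  by_cases e4 : d = v
  · subst e4
    exact hac (key h a c ha hc (nbv _ hd.symm) (nbv _ hda) (nbv _ hcd.symm))
  have ad : ∀ x y, x ≠ v → y ≠ v → (switch G v S hv).Adj x y → G.Adj x y := by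
    intro x y h1 h2 h3
    simp only [switch] at h3
    tauto
  exact wheel_elim hG (ad _ _ e0 e1 ha) (ad _ _ e0 e2 hb) (ad _ _ e0 e3 hc) (ad _ _ e0 e4 hd)
    (ad _ _ e1 e2 hab) (ad _ _ e2 e3 hbc) (ad _ _ e3 e4 hcd) (ad _ _ e4 e1 hda) hac hbd

theorem sum_nb {n : ℕ} (G : SimpleGraph (Fin n)) [DecidableRel G.Adj] (f : Fin n → ℝ) (v : Fin n) :
    ∑ j ∈ nb G v, f j = ∑ j, if G.Adj v j then f j else 0 := by
  classical
  rw [← Finset.sum_filter]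
  refine Finset.sum_congr ?_ fun _ _ => rfl
  ext u; simp [nb]

theorem switch_ineq {n : ℕ} (hn : 0 < n) {G : SimpleGraph (Fin n)} (hG : IsSpexWheel 5 G)
    (hl : 0 < lam1 G) (x : Fin n → ℝ) (hx0 : ∀ i, 0 ≤ x i)
    (hx : ∀ i, ∑ j ∈ nb G i, x j = lam1 G * x i)
    (v : Fin n) (S : Finset (Fin n)) (hv : v ∉ S)
    (hS : ∀ u ∈ S, ∀ a ∈ S, ∀ b ∈ S, G.Adj u a → G.Adj u b → a = b) :
    ∑ s ∈ S, x s ≤ lam1 G * x v := by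
  classical
  set l := lam1 G with hldef
  set Sg := ∑ s ∈ S, x s with hSg
  have hle := hG.2 _ (switch_free hG.1 v S hv hS)
  obtain ⟨_, _, _, _, _, hR⟩ := spec hn (switch G v S hv)
  have main : ∀ t : ℝ, 2 * t * Sg ≤ l * (x v ^ 2 + t ^ 2) := by
    intro t
    set y : Fin n → ℝ := Function.update x v t with hy
    have h1 := hR y
    have h2 : ∑ i, y i ^ 2 = ∑ i, x i ^ 2 - x v ^ 2 + t ^ 2 := by
      have : ∀ i, y i ^ 2 = x i ^ 2 + if i = v then (t ^ 2 - x v ^ 2) else 0 := by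
        intro i
        by_cases h : i = v
        · subst h; simp [y]
        · simp [y, h]
      simp only [this, Finset.sum_add_distrib, Finset.sum_ite_eq', Finset.mem_univ, if_true]
      ring
    have h3 : ∑ i, ∑ j ∈ nb (switch G v S hv) i, y i * y j
        = l * ∑ i, x i ^ 2 - 2 * l * x v ^ 2 + 2 * t * Sg := by
      have e : ∀ i j, (if (switch G v S hv).Adj i j then y i * y j else 0)
          = (if G.Adj i j then x i * x j else 0)
            - (if i = v then (if G.Adj v j then x v * x j else 0) else 0)
            - (if j = v then (if G.Adj v i then x v * x i else 0) else 0)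
            + (if i = v then (if j ∈ S then t * x j else 0) else 0)
            + (if j = v then (if i ∈ S then t * x i else 0) else 0) := by
        intro i j
        by_cases hi : i = v <;> by_cases hj : j = v
        · subst hi; subst hj; simp [switch, hv]
        · subst hi; simp [switch, hj, y]
        · subst hj; simp [switch, hi, y, SimpleGraph.adj_comm, mul_comm]
        · simp [switch, hi, hj, y]
      simp only [sum_nb, e, Finset.sum_add_distrib, Finset.sum_sub_distrib]
      have r1 : ∑ i, ∑ j, (if G.Adj i j then x i * x j else 0) = l * ∑ i, x i ^ 2 := by
        rw [Finset.mul_sum]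
        refine Finset.sum_congr rfl fun i _ => ?_
        have := hx i
        rw [sum_nb] at this
        calc _ = x i * ∑ j, (if G.Adj i j then x j else 0) := by
              rw [Finset.mul_sum]; simp
          _ = _ := by rw [this]; ring
      have r2 : ∑ j, (if G.Adj v j then x v * x j else 0) = l * x v ^ 2 := by
        have := hx v
        rw [sum_nb] at this
        calc _ = x v * ∑ j, (if G.Adj v j then x j else 0) := by
              rw [Finset.mul_sum]; simp
          _ = _ := by rw [this]; ring
      have r3 : ∑ j, (if j ∈ S then t * x j else 0) = t * Sg := by
        rw [← Finset.sum_filter, hSg, Finset.mul_sum]; simp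
      have r4 : ∀ f : Fin n → ℝ, ∑ i, ∑ j, (if i = v then f j else 0) = ∑ j, f j := by
        intro f; rw [Finset.sum_comm]; simp
      have r5 : ∀ f : Fin n → ℝ, ∑ i, ∑ j, (if j = v then f i else 0) = ∑ j, f j := by
        intro f; simp
      rw [r4, r4, r5, r5, r1, r2, r3]
      ring
    rw [h2, h3] at h1
    have h4 : 0 ≤ ∑ i, x i ^ 2 - x v ^ 2 + t ^ 2 := by
      rw [← h2]; exact Finset.sum_nonneg fun i _ => sq_nonneg _
    have h5 := mul_le_mul_of_nonneg_right hle h4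
    nlinarith
  have hm := main (Sg / l)
  have hm2 : Sg ^ 2 ≤ (l * x v) ^ 2 := by
    have e1 : 2 * (Sg / l) * Sg = 2 * (Sg ^ 2 / l) := by ring
    have e2 : l * (x v ^ 2 + (Sg / l) ^ 2) = l * x v ^ 2 + Sg ^ 2 / l := by field_simp
    rw [e1, e2] at hm
    have : Sg ^ 2 / l ≤ l * x v ^ 2 := by linarith
    rw [div_le_iff₀ hl] at this
    nlinarith
  exact abs_le_of_sq_le_sq' hm2 (mul_nonneg hl.le (hx0 v)) |>.2

theorem add_edge {n : ℕ} (hn : 0 < n) {G : SimpleGraph (Fin n)} (hG : IsSpexWheel 5 G)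
    (x : Fin n → ℝ) (hx0 : ∀ i, 0 < x i)
    (hx : ∀ i, ∑ j ∈ nb G i, x j = lam1 G * x i)
    {u v : Fin n} (huv : u ≠ v) (hna : ¬ G.Adj u v)
    (hf : WheelFree 5 (G ⊔ SimpleGraph.edge u v)) : False := by
  classical
  have hle := hG.2 _ hf
  obtain ⟨_, _, _, _, _, hR⟩ := spec hn (G ⊔ SimpleGraph.edge u v)
  have h1 := hR x
  have r1 : ∑ i, ∑ j ∈ nb G i, x i * x j = lam1 G * ∑ i, x i ^ 2 := by
    rw [Finset.mul_sum]
    refine Finset.sum_congr rfl fun i _ => ?_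
    rw [← Finset.mul_sum, hx i]; ring
  have h2 : ∑ i, ∑ j ∈ nb G i, x i * x j <
      ∑ i, ∑ j ∈ nb (G ⊔ SimpleGraph.edge u v) i, x i * x j := by
    have hsub : ∀ i, nb G i ⊆ nb (G ⊔ SimpleGraph.edge u v) i := by
      intro i j hj
      rw [mem_nb] at *
      exact Or.inl hj
    refine Finset.sum_lt_sum (fun i _ => ?_) ⟨u, Finset.mem_univ u, ?_⟩
    · exact Finset.sum_le_sum_of_subset_of_nonneg (hsub i)
        fun j _ _ => mul_nonneg (hx0 i).le (hx0 j).le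
    · refine Finset.sum_lt_sum_of_subset (hsub u) (i := v) ?_ ?_ (mul_pos (hx0 u) (hx0 v))
        fun j _ _ => mul_nonneg (hx0 u).le (hx0 j).le
      · rw [mem_nb]; right; simp [SimpleGraph.edge_adj, huv]
      · rw [mem_nb]; exact hna
  have h3 : 0 ≤ ∑ i, x i ^ 2 := Finset.sum_nonneg fun i _ => sq_nonneg _
  nlinarith

/-- the candidate graph: parts are the two parity classes, with matchings inside -/
def cand (n : ℕ) : SimpleGraph (Fin n) where
  Adj i j := i ≠ j ∧ (i.val % 2 ≠ j.val % 2 ∨ i.val / 4 = j.val / 4)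
  symm := by
    constructor
    intro a b h
    exact ⟨h.1.symm, by rcases h.2 with h | h; exacts [Or.inl h.symm, Or.inr h.symm]⟩
  loopless := by
    constructor
    intro a h
    exact h.1 rfl

theorem cand_free (n : ℕ) : WheelFree 5 (cand n) := by
  apply wheelFree_of_paired (A := Finset.univ.filter fun i : Fin n => i.val % 2 = 0)
  intro u v w h1 h2 h3 h4
  simp only [Finset.mem_filter, Finset.mem_univ, true_and] at h1 h2
  simp only [cand, ne_eq, Fin.ext_iff] at h3 h4
  ext
  omega

def cdeg (n m : ℕ) : ℕ :=
  ∑ j ∈ Finset.range m, if (n ≠ j ∧ (n % 2 ≠ j % 2 ∨ n / 4 = j / 4)) then 1 else 0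

theorem cdeg_eq (n m : ℕ) (h : m ≤ n) :
    cdeg n m = (m + n % 2) / 2 + if (2 ≤ n % 4 ∧ n < m + 2) then 1 else 0 := by
  induction m with
  | zero => simp [cdeg]; omega
  | succ m ih =>
    have := ih (by omega)
    unfold cdeg at *
    rw [Finset.sum_range_succ, this]
    split_ifs <;> omega

def csum (n : ℕ) : ℕ := ∑ i ∈ Finset.range n, cdeg i n

theorem csum_succ (n : ℕ) : csum (n + 1) = csum n + 2 * cdeg n n := by
  unfold csum
  rw [Finset.sum_range_succ]
  have h1 : ∀ i, cdeg i (n + 1) = cdeg i n +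
      if (i ≠ n ∧ (i % 2 ≠ n % 2 ∨ i / 4 = n / 4)) then 1 else 0 := by
    intro i; unfold cdeg; rw [Finset.sum_range_succ]
  simp only [h1, Finset.sum_add_distrib]
  have h2 : ∑ i ∈ Finset.range n, (if (i ≠ n ∧ (i % 2 ≠ n % 2 ∨ i / 4 = n / 4)) then 1 else 0)
      = cdeg n n := by
    unfold cdeg
    refine Finset.sum_congr rfl fun i _ => ?_
    congr 1
    simp only [ne_eq, eq_comm]
  rw [h2]
  simp
  ring

theorem csum_eq (k : ℕ) : csum (4 * k) = 8 * k ^ 2 + 4 * k ∧ csum (4 * k + 1) = 8 * k ^ 2 + 8 * k ∧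
    csum (4 * k + 2) = 8 * k ^ 2 + 12 * k + 2 ∧ csum (4 * k + 3) = 8 * k ^ 2 + 16 * k + 6 := by
  have c0 : ∀ k, cdeg (4 * k) (4 * k) = 2 * k := by
    intro k; rw [cdeg_eq _ _ le_rfl]; split_ifs <;> omega
  have c1 : ∀ k, cdeg (4 * k + 1) (4 * k + 1) = 2 * k + 1 := by
    intro k; rw [cdeg_eq _ _ le_rfl]; split_ifs <;> omega
  have c2 : ∀ k, cdeg (4 * k + 2) (4 * k + 2) = 2 * k + 2 := by
    intro k; rw [cdeg_eq _ _ le_rfl]; split_ifs <;> omega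
  have c3 : ∀ k, cdeg (4 * k + 3) (4 * k + 3) = 2 * k + 3 := by
    intro k; rw [cdeg_eq _ _ le_rfl]; split_ifs <;> omega
  have h0 : csum (4 * k) = 8 * k ^ 2 + 4 * k := by
    induction k with
    | zero => simp [csum]
    | succ k ih =>
      have e : 4 * (k + 1) = 4 * k + 1 + 1 + 1 + 1 := by ring
      rw [e, csum_succ, csum_succ, csum_succ, csum_succ, ih, c0, c1, c2, c3]
      ring
  refine ⟨h0, ?_, ?_, ?_⟩
  · rw [csum_succ, h0, c0]; ring
  · rw [csum_succ, csum_succ, h0, c0, c1]; ring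
  · rw [csum_succ, csum_succ, csum_succ, h0, c0, c1, c2]; ring

theorem cand_sum (n : ℕ) : ∑ v, (nb (cand n) v).card = csum n := by
  classical
  unfold csum
  rw [Finset.sum_range]
  refine Finset.sum_congr rfl fun i _ => ?_
  unfold cdeg
  rw [Finset.sum_range, ← Finset.card_filter]
  congr 1
  ext j
  simp [mem_nb, cand, Fin.ext_iff]

theorem edge_le {n : ℕ} (hn : 0 < n) (H : SimpleGraph (Fin n)) :
    ((∑ v, (nb H v).card : ℕ) : ℝ) ≤ lam1 H * n := by
  obtain ⟨_, _, _, _, _, hR⟩ := spec hn H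
  have := hR (fun _ => 1)
  simpa using this

theorem spex_ge {n : ℕ} (hn : 0 < n) {G : SimpleGraph (Fin n)} (hG : IsSpexWheel 5 G) :
    (csum n : ℝ) ≤ lam1 G * n := by
  have h1 := edge_le hn (cand n)
  rw [cand_sum] at h1
  have h2 := hG.2 _ (cand_free n)
  have : (0 : ℝ) ≤ n := by positivity
  nlinarith

theorem c4_count {n : ℕ} {G : SimpleGraph (Fin n)} (hG : WheelFree 5 G) (z : Fin n) (K : ℕ) :
    2 * K * ∑ w ∈ nb G z, (nb G z ∩ nb G w).card ≤
      (nb G z).card ^ 2 + (nb G z).card * (K ^ 2 + K) := by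
  classical
  set S := nb G z with hS
  have h1 : ∑ w ∈ S, (S ∩ nb G w).offDiag.card ≤ S.card ^ 2 := by
    rw [← Finset.card_biUnion]
    · rw [sq, ← Finset.card_product]
      apply Finset.card_le_card
      intro p hp
      simp only [Finset.mem_biUnion, Finset.mem_offDiag, Finset.mem_inter] at hp
      obtain ⟨w, _, h⟩ := hp
      exact Finset.mem_product.2 ⟨h.1.1, h.2.1.1⟩
    · intro w hw w' hw' hne
      refine Finset.disjoint_left.2 ?_
      intro p hp hp'
      rw [Finset.mem_coe, hS, mem_nb] at hw hw'
      simp only [Finset.mem_offDiag, Finset.mem_inter, mem_nb, hS] at hp hp'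
      exact wheel_elim hG (h := z) (a := w) (b := p.1) (c := w') (d := p.2)
        hw hp.1.1 hw' hp.2.1.1 hp.1.2 hp'.1.2.symm hp'.2.1.2 hp.2.1.2.symm hne hp.2.2
  have h2 : ∀ w ∈ S, 2 * K * (S ∩ nb G w).card ≤ (S ∩ nb G w).offDiag.card + (K ^ 2 + K) := by
    intro w _
    rw [Finset.offDiag_card]
    set d := (S ∩ nb G w).card
    have h3 : d ≤ d * d := Nat.le_mul_self d
    zify [h3]
    rcases le_or_gt d K with h | h
    · have : (0:ℤ) ≤ (K - d) * (K - d + 1) := mul_nonneg (by omega) (by omega)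
      nlinarith
    · have : (0:ℤ) ≤ (d - K) * (d - K - 1) := mul_nonneg (by omega) (by omega)
      nlinarith
  rw [Finset.mul_sum]
  calc _ ≤ ∑ w ∈ S, ((S ∩ nb G w).offDiag.card + (K ^ 2 + K)) := Finset.sum_le_sum h2
    _ = ∑ w ∈ S, (S ∩ nb G w).offDiag.card + S.card * (K ^ 2 + K) := by
      rw [Finset.sum_add_distrib]; simp
    _ ≤ _ := by omega

theorem cherry {n : ℕ} {G : SimpleGraph (Fin n)} (hG : WheelFree 5 G) {a b c : Fin n}
    (hab : G.Adj a b) (hac : G.Adj a c) (hbc : b ≠ c) (T : Finset (Fin n)) :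
    T.card ≤ (T \ nb G a).card + (T \ nb G b).card + (T \ nb G c).card + 1 := by
  classical
  by_contra hlt
  push Not at hlt
  set U := (T \ nb G a) ∪ (T \ nb G b) ∪ (T \ nb G c) with hU
  have h1 : U.card ≤ (T \ nb G a).card + (T \ nb G b).card + (T \ nb G c).card :=
    (Finset.card_union_le _ _).trans (Nat.add_le_add_right (Finset.card_union_le _ _) _)
  have h2 := Finset.le_card_sdiff U T
  have h3 : 1 < (T \ U).card := by omega
  obtain ⟨s, hs, t, ht, hst⟩ := Finset.one_lt_card.1 h3
  simp only [hU, Finset.mem_sdiff, Finset.mem_union, mem_nb, not_or, not_and, not_not] at hs ht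
  obtain ⟨hs0, ⟨hs1, hs2⟩, hs3⟩ := hs
  obtain ⟨ht0, ⟨ht1, ht2⟩, ht3⟩ := ht
  exact wheel_elim hG hab (hs1 hs0) hac (ht1 ht0) (hs2 hs0) (hs3 hs0).symm (ht3 ht0) (ht2 ht0).symm
    hbc hst

theorem bad_card {n : ℕ} (hn : 0 < n) (G : SimpleGraph (Fin n)) (A B : Finset (Fin n))
    (h : 1000000 * ∑ u ∈ A, (B \ nb G u).card ≤ n ^ 2) :
    1000 * (A.filter fun u => n < 1000 * (B \ nb G u).card).card ≤ n := by
  set L := A.filter fun u => n < 1000 * (B \ nb G u).card with hL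
  have h1 : L.card * n ≤ 1000 * ∑ u ∈ L, (B \ nb G u).card := by
    rw [Finset.mul_sum, ← smul_eq_mul, ← Finset.sum_const]
    refine Finset.sum_le_sum fun u hu => ?_
    exact ((Finset.mem_filter.1 hu).2).le
  have h2 : ∑ u ∈ L, (B \ nb G u).card ≤ ∑ u ∈ A, (B \ nb G u).card :=
    Finset.sum_le_sum_of_subset (Finset.filter_subset _ _)
  have h3 : (1000 * L.card) * n ≤ n * n := by nlinarith
  exact Nat.le_of_mul_le_mul_right h3 hn

theorem csum_ge {n : ℕ} (hn : 4 ≤ n) : n * n ≤ 2 * csum n := by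
  obtain ⟨h0, h1, h2, h3⟩ := csum_eq (n / 4)
  have hk : 1 ≤ n / 4 := by omega
  have hc : n = 4 * (n / 4) ∨ n = 4 * (n / 4) + 1 ∨ n = 4 * (n / 4) + 2 ∨ n = 4 * (n / 4) + 3 := by
    omega
  set k := n / 4
  rcases hc with h | h | h | h <;> rw [h]
  · rw [h0]; nlinarith
  · rw [h1]; nlinarith
  · rw [h2]; nlinarith
  · rw [h3]; nlinarith

set_option maxHeartbeats 2000000 in
theorem structure_thm {n : ℕ} (hn : 10000000000000 ≤ n) {G : SimpleGraph (Fin n)}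
    (hG : IsSpexWheel 5 G) :
    ∃ (x : Fin n → ℝ) (A : Finset (Fin n)), (∀ i, 0 < x i) ∧
      (∀ i, ∑ j ∈ nb G i, x j = lam1 G * x i) ∧ Paired G A := by
  classical
  have hn0 : 0 < n := by omega
  obtain ⟨x, hx0, ⟨z, hz⟩, hx1, hx, -⟩ := spec hn0 G
  have hnR : (10000000000000 : ℝ) ≤ n := by exact_mod_cast hn
  set l := lam1 G with hl
  have hln : (n : ℝ) / 2 ≤ l := by
    have h1 := spex_ge hn0 hG
    have h2 : (n : ℝ) * n ≤ 2 * csum n := by exact_mod_cast csum_ge (by omega : 4 ≤ n)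
    have : (n : ℝ) * n ≤ 2 * l * n := by linarith
    have := le_of_mul_le_mul_right this (by linarith)
    linarith
  have hlpos : 0 < l := by linarith
  set A := nb G z with hA
  set B := Aᶜ with hB
  have hsplit : ∀ u, (nb G u).card + (B \ nb G u).card = (A ∩ nb G u).card + B.card := by
    intro u
    have h1 : (nb G u).card = (nb G u ∩ A).card + (nb G u \ A).card :=
      (Finset.card_inter_add_card_sdiff _ _).symm
    have h2 : B.card = (B ∩ nb G u).card + (B \ nb G u).card :=
      (Finset.card_inter_add_card_sdiff _ _).symm
    have h3 : nb G u \ A = B ∩ nb G u := by ext; simp [hB, and_comm]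
    rw [h1, h2, h3, Finset.inter_comm (nb G u) A]; ring
  set M := ∑ u ∈ A, (B \ nb G u).card with hM
  set P := ∑ u ∈ A, (A ∩ nb G u).card with hP
  have hcount : ∑ u ∈ A, (nb G u).card + M = P + A.card * B.card := by
    rw [hM, hP, ← Finset.sum_add_distrib, ← smul_eq_mul, ← Finset.sum_const,
      ← Finset.sum_add_distrib]
    exact Finset.sum_congr rfl fun u _ => hsplit u
  have hl2 : l ^ 2 ≤ ((∑ u ∈ A, (nb G u).card : ℕ) : ℝ) := by
    have h1 : l ^ 2 = ∑ u ∈ A, ∑ w ∈ nb G u, x w := by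
      calc l ^ 2 = l * (l * x z) := by rw [hz]; ring
        _ = l * ∑ u ∈ A, x u := by rw [← hx z]
        _ = ∑ u ∈ A, l * x u := by rw [Finset.mul_sum]
        _ = _ := Finset.sum_congr rfl fun u _ => (hx u).symm
    rw [h1]
    push_cast
    refine Finset.sum_le_sum fun u _ => ?_
    calc _ ≤ ∑ w ∈ nb G u, (1 : ℝ) := Finset.sum_le_sum fun w _ => hx1 w
      _ = _ := by simp
  have hPb := c4_count hG.1 z 1000000
  rw [← hA, ← hP] at hPb
  have hABn : A.card + B.card = n := by
    rw [hB, Finset.card_add_card_compl, Fintype.card_fin]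
  have hABr : (A.card : ℝ) + B.card = n := by exact_mod_cast hABn
  have hPbr : 2000000 * (P : ℝ) ≤ (A.card : ℝ) ^ 2 + A.card * (1000000 ^ 2 + 1000000) := by
    have : ((2 * 1000000 * P : ℕ) : ℝ) ≤ ((A.card ^ 2 + A.card * (1000000 ^ 2 + 1000000) : ℕ) : ℝ) := by
      exact_mod_cast hPb
    push_cast at this
    linarith
  have hcr : ((∑ u ∈ A, (nb G u).card : ℕ) : ℝ) + M = P + A.card * B.card := by exact_mod_cast hcount
  have hAn : (A.card : ℝ) ≤ n := by
    have : (0 : ℝ) ≤ B.card := Nat.cast_nonneg _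
    linarith
  have hPn : (P : ℝ) ≤ n ^ 2 / 1000000 := by
    have h0 : (0 : ℝ) ≤ A.card := Nat.cast_nonneg _
    have h1 : (A.card : ℝ) ^ 2 ≤ n ^ 2 := by gcongr
    nlinarith
  have hMain : (M : ℝ) + (A.card - n / 2) ^ 2 ≤ n ^ 2 / 1000000 := by
    have h1 : (n : ℝ) ^ 2 / 4 ≤ l ^ 2 := by nlinarith
    have h2 : (B.card : ℝ) = n - A.card := by linarith
    rw [h2] at hcr
    nlinarith
  have hMn : 1000000 * M ≤ n ^ 2 := by
    have : 1000000 * (M : ℝ) ≤ n ^ 2 := by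
      have := sq_nonneg ((A.card : ℝ) - n / 2)
      linarith
    exact_mod_cast this
  have hAabs : |(A.card : ℝ) - n / 2| ≤ n / 1000 := by
    apply abs_le_of_sq_le_sq
    · have h1 : (0 : ℝ) ≤ M := Nat.cast_nonneg M
      have h2 : ((n : ℝ) / 1000) ^ 2 = n ^ 2 / 1000000 := by ring
      rw [h2]
      linarith
    · linarith
  obtain ⟨hA1, hA2⟩ := abs_le.1 hAabs
  have hMsymm : M = ∑ w ∈ B, (A \ nb G w).card := by
    rw [hM]
    simp only [Finset.sdiff_eq_filter, Finset.card_filter]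
    rw [Finset.sum_comm]
    refine Finset.sum_congr rfl fun w _ => Finset.sum_congr rfl fun u _ => ?_
    simp [mem_nb, SimpleGraph.adj_comm]
  have hLA := bad_card hn0 G A B hMn
  have hLB := bad_card hn0 G B A (hMsymm ▸ hMn)
  set LA := A.filter fun u => n < 1000 * (B \ nb G u).card with hLAdef
  set LB := B.filter fun u => n < 1000 * (A \ nb G u).card with hLBdef
  have hLAr : 1000 * (LA.card : ℝ) ≤ n := by exact_mod_cast hLA
  set S := A \ LA with hS
  set T := B \ LB with hT
  have hSm : ∀ s ∈ S, 1000 * (B \ nb G s).card ≤ n := by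
    intro s hs
    simp only [hS, hLAdef, Finset.mem_sdiff, Finset.mem_filter, not_and, not_lt] at hs
    exact hs.2 hs.1
  have hTm : ∀ s ∈ T, 1000 * (A \ nb G s).card ≤ n := by
    intro s hs
    simp only [hT, hLBdef, Finset.mem_sdiff, Finset.mem_filter, not_and, not_lt] at hs
    exact hs.2 hs.1
  have hAc1 : 499 * n ≤ 1000 * A.card := by
    have : 499 * (n : ℝ) ≤ 1000 * A.card := by linarith
    exact_mod_cast this
  have hAc2 : 1000 * A.card ≤ 501 * n := by
    have : 1000 * (A.card : ℝ) ≤ 501 * n := by linarith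
    exact_mod_cast this
  have hSn : ∀ u ∈ S, ∀ a ∈ S, ∀ b ∈ S, G.Adj u a → G.Adj u b → a = b := by
    intro u hu a ha b hb h1 h2
    by_contra hne
    have := cherry hG.1 h1 h2 hne B
    have := hSm u hu
    have := hSm a ha
    have := hSm b hb
    omega
  have hxv : ∀ v, l - n / 1000 - 1 ≤ l * x v := by
    intro v
    have h1 := switch_ineq hn0 hG hlpos x hx0 hx v (S.erase v) (Finset.notMem_erase v S)
      (fun u hu a ha b hb => hSn u (Finset.mem_of_mem_erase hu) a (Finset.mem_of_mem_erase ha) b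
        (Finset.mem_of_mem_erase hb))
    have h2 : ∑ s ∈ S, x s ≤ ∑ s ∈ S.erase v, x s + 1 := by
      by_cases h : v ∈ S
      · rw [← Finset.sum_erase_add _ _ h]; linarith [hx1 v]
      · rw [Finset.erase_eq_of_notMem h]; linarith
    have h3 : ∑ s ∈ A, x s = l := by rw [hA, hx z, hz, mul_one]
    have h4 : ∑ s ∈ S, x s + ∑ s ∈ LA, x s = ∑ s ∈ A, x s :=
      Finset.sum_sdiff (Finset.filter_subset _ _)
    have h5 : ∑ s ∈ LA, x s ≤ LA.card := by
      calc _ ≤ ∑ w ∈ LA, (1 : ℝ) := Finset.sum_le_sum fun w _ => hx1 w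
        _ = _ := by simp
    linarith
  have hxpos : ∀ v, 0 < x v := by
    intro v
    have := hxv v
    have h : 0 < l * x v := by linarith
    exact (mul_pos_iff_of_pos_left hlpos).1 h
  have hdeg : ∀ v, 499 * n ≤ 1000 * (nb G v).card + 1000 := by
    intro v
    have h1 := hxv v
    have h2 : l * x v ≤ (nb G v).card := by
      rw [← hx v]
      calc _ ≤ ∑ w ∈ nb G v, (1 : ℝ) := Finset.sum_le_sum fun w _ => hx1 w
        _ = _ := by simp
    have : 499 * (n : ℝ) ≤ 1000 * (nb G v).card + 1000 := by linarith
    exact_mod_cast this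
  have hST : ∀ v, (nb G v).card ≤ (S ∩ nb G v).card + (T ∩ nb G v).card + LA.card + LB.card := by
    intro v
    have : nb G v ⊆ (S ∩ nb G v) ∪ (T ∩ nb G v) ∪ LA ∪ LB := by
      intro u hu
      simp only [hS, hT, hB, Finset.mem_union, Finset.mem_inter, Finset.mem_sdiff,
        Finset.mem_compl]
      by_cases hLB : u ∈ LB
      · tauto
      · tauto
    refine (Finset.card_le_card this).trans ?_
    refine (Finset.card_union_le _ _).trans (Nat.add_le_add_right ?_ _)
    refine (Finset.card_union_le _ _).trans (Nat.add_le_add_right ?_ _)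
    exact Finset.card_union_le _ _
  have hTsub : T ⊆ B := Finset.sdiff_subset
  have hSsub : S ⊆ A := Finset.sdiff_subset
  have hScard : A.card ≤ S.card + LA.card := by
    have := Finset.le_card_sdiff LA A
    rw [← hS] at this
    omega
  have hTcard : B.card ≤ T.card + LB.card := by
    have := Finset.le_card_sdiff LB B
    rw [← hT] at this
    omega
  have hTcard2 := Finset.card_le_card hTsub
  have hScard2 := Finset.card_le_card hSsub
  -- a vertex with two neighbours in a good set has few in the other
  have few : ∀ (U W W' : Finset (Fin n)) (v : Fin n), W ⊆ W' →
      (∀ s ∈ U, 1000 * (W' \ nb G s).card ≤ n) →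
      2 ≤ (U ∩ nb G v).card → 1000 * (W ∩ nb G v).card ≤ 2 * n + 1000 := by
    intro U W W' v hW hU h2
    obtain ⟨s, hs, t, ht, hst⟩ := Finset.one_lt_card.1 h2
    rw [Finset.mem_inter, mem_nb] at hs ht
    have h3 := cherry hG.1 hs.2 ht.2 hst (W ∩ nb G v)
    have h4 : ((W ∩ nb G v) \ nb G v).card = 0 := by
      rw [Finset.card_eq_zero]
      ext u; simp
    have h5 : ∀ s, ((W ∩ nb G v) \ nb G s).card ≤ (W' \ nb G s).card := fun s =>
      Finset.card_le_card (Finset.sdiff_subset_sdiff (Finset.inter_subset_left.trans hW)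
        (Finset.Subset.refl _))
    have := h5 s
    have := h5 t
    have := hU s hs.1
    have := hU t ht.1
    omega
  have dich : ∀ v, 2 ≤ (S ∩ nb G v).card → (T ∩ nb G v).card ≤ 1 := by
    intro v h1
    by_contra h2
    have f1 := few S T B v hTsub hSm h1
    have f2 := few T S A v hSsub hTm (by omega)
    have := hdeg v
    have := hST v
    omega
  have missT : ∀ v, (S ∩ nb G v).card ≤ 1 → 1000 * (T \ nb G v).card ≤ 5 * n := by
    intro v h
    have := hdeg v
    have := hST v
    have := Finset.card_inter_add_card_sdiff T (nb G v)
    omega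
  have missS : ∀ v, (T ∩ nb G v).card ≤ 1 → 1000 * (S \ nb G v).card ≤ 5 * n := by
    intro v h
    have := hdeg v
    have := hST v
    have := Finset.card_inter_add_card_sdiff S (nb G v)
    omega
  refine ⟨x, Finset.univ.filter fun v => (S ∩ nb G v).card ≤ 1, hxpos, hx, ?_⟩
  intro u v w h1 h2 huv huw
  simp only [Finset.mem_filter, Finset.mem_univ, true_and] at h1 h2
  by_contra hne
  by_cases hu : (S ∩ nb G u).card ≤ 1
  · have := cherry hG.1 huv huw hne T
    have := missT u hu
    have := missT v (h1.1 hu)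
    have := missT w (h2.1 hu)
    omega
  · have hv : ¬ (S ∩ nb G v).card ≤ 1 := fun h => hu (h1.2 h)
    have hw : ¬ (S ∩ nb G w).card ≤ 1 := fun h => hu (h2.2 h)
    have := cherry hG.1 huv huw hne S
    have := missS u (dich u (by omega))
    have := missS v (dich v (by omega))
    have := missS w (dich w (by omega))
    omega

theorem paired_add {n : ℕ} {G : SimpleGraph (Fin n)} {A : Finset (Fin n)} (hP : Paired G A)
    {u v : Fin n}
    (h : (u ∈ A ↔ v ∈ A) → (∀ w, (u ∈ A ↔ w ∈ A) → ¬ G.Adj u w) ∧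
      (∀ w, (v ∈ A ↔ w ∈ A) → ¬ G.Adj v w)) :
    Paired (G ⊔ SimpleGraph.edge u v) A := by
  intro a b c h1 h2 h3 h4
  simp only [SimpleGraph.sup_adj, SimpleGraph.edge_adj] at h3 h4
  have := hP a b c h1 h2
  by_cases hs : (u ∈ A ↔ v ∈ A)
  · obtain ⟨k1, k2⟩ := h hs
    have q1 := k1 b
    have q2 := k1 c
    have q3 := k2 b
    have q4 := k2 c
    grind
  · grind

theorem even_side {n : ℕ} (G : SimpleGraph (Fin n)) (A : Finset (Fin n)) :
    Even (∑ v ∈ A, (A ∩ nb G v).card) := by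
  classical
  let H : SimpleGraph (Fin n) :=
    { Adj := fun u v => u ∈ A ∧ v ∈ A ∧ G.Adj u v
      symm := by constructor; intro a b h; exact ⟨h.2.1, h.1, h.2.2.symm⟩
      loopless := by constructor; intro a h; exact G.irrefl h.2.2 }
  have h := edgeCount_eq H
  have h2 : ∑ v, (nb H v).card = ∑ v ∈ A, (A ∩ nb G v).card := by
    rw [← Finset.sum_subset (Finset.subset_univ A)]
    · refine Finset.sum_congr rfl fun v hv => ?_
      congr 1
      ext u
      simp [mem_nb, H, hv]
    · intro v _ hv
      rw [Finset.card_eq_zero]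
      ext u
      simp [mem_nb, H, hv]
  rw [← h2, ← h]
  exact even_two_mul _

theorem side_count {n : ℕ} (G : SimpleGraph (Fin n)) (A : Finset (Fin n))
    (h : ∀ u ∈ A, ∀ v ∈ A, A ∩ nb G u = ∅ → A ∩ nb G v = ∅ → u = v) :
    2 * (A.card / 2) ≤ ∑ v ∈ A, (A ∩ nb G v).card := by
  classical
  obtain ⟨r, hr⟩ := even_side G A
  set L := A.filter fun v => A ∩ nb G v = ∅ with hL
  have h1 : L.card ≤ 1 := by
    rw [Finset.card_le_one]
    intro u hu v hv
    rw [Finset.mem_filter] at hu hv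
    exact h u hu.1 v hv.1 hu.2 hv.2
  have h2 : A.card ≤ ∑ v ∈ A, (A ∩ nb G v).card + L.card := by
    rw [hL, Finset.card_filter, ← Finset.sum_add_distrib, Finset.card_eq_sum_ones]
    refine Finset.sum_le_sum fun v _ => ?_
    split_ifs with h0
    · omega
    · have := Finset.card_pos.2 (Finset.nonempty_iff_ne_empty.2 h0)
      omega
  omega

theorem side_spec {n : ℕ} {G : SimpleGraph (Fin n)} {x : Fin n → ℝ} (hx0 : ∀ i, 0 < x i)
    {l : ℝ} (hx : ∀ i, ∑ j ∈ nb G i, x j = l * x i) (A : Finset (Fin n))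
    (h1 : ∀ u ∈ A, (A ∩ nb G u).card ≤ 1) :
    (l - 1) * ∑ v ∈ A, x v ≤ A.card * ∑ v ∈ Aᶜ, x v ∧
    (Odd A.card → (l - 1) * ∑ v ∈ A, x v < A.card * ∑ v ∈ Aᶜ, x v) := by
  classical
  have e1 : l * ∑ v ∈ A, x v = ∑ u, x u * (A ∩ nb G u).card := by
    rw [Finset.mul_sum, ← Finset.sum_congr rfl fun i _ => hx i]
    simp only [sum_nb]
    rw [Finset.sum_comm]
    refine Finset.sum_congr rfl fun u _ => ?_
    have : A ∩ nb G u = A.filter fun v => G.Adj v u := by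
      ext v; simp [mem_nb, SimpleGraph.adj_comm]
    rw [this, ← Finset.sum_filter]
    simp [mul_comm]
  rw [← Finset.sum_add_sum_compl A] at e1
  have e2 : ∑ u ∈ Aᶜ, x u * (A ∩ nb G u).card ≤ A.card * ∑ v ∈ Aᶜ, x v := by
    rw [Finset.mul_sum]
    refine Finset.sum_le_sum fun u _ => ?_
    rw [mul_comm]
    have : ((A ∩ nb G u).card : ℝ) ≤ A.card := by
      exact_mod_cast Finset.card_le_card Finset.inter_subset_left
    exact mul_le_mul_of_nonneg_right this (hx0 u).le
  have e3 : ∀ u ∈ A, x u * (A ∩ nb G u).card ≤ x u := by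
    intro u hu
    have : ((A ∩ nb G u).card : ℝ) ≤ 1 := by exact_mod_cast h1 u hu
    nlinarith [hx0 u]
  constructor
  · have := Finset.sum_le_sum e3
    linarith
  · intro hodd
    have : ∃ u ∈ A, (A ∩ nb G u).card = 0 := by
      by_contra hcon
      push Not at hcon
      have h2 : ∑ v ∈ A, (A ∩ nb G v).card = A.card := by
        rw [Finset.card_eq_sum_ones A]
        refine Finset.sum_congr rfl fun u hu => ?_
        have := hcon u hu
        have := h1 u hu
        omega
      have h3 := even_side G A
      rw [h2] at h3
      exact (Nat.not_even_iff_odd.2 hodd) h3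
    obtain ⟨u, hu, hu0⟩ := this
    have := Finset.sum_lt_sum e3 ⟨u, hu, by rw [hu0]; simpa using hx0 u⟩
    linarith

set_option maxHeartbeats 1000000 in
theorem arith {n a b e : ℕ} (hn : 100 ≤ n) (hab : a + b = n) {l : ℝ} 
    (h1 : (l - 1) ^ 2 ≤ a * b) (h2 : Odd a → (l - 1) ^ 2 < a * b)
    (h3 : (csum n : ℝ) ≤ l * n) (h4 : 2 * (e : ℝ) ≤ l * n) :
    e ≤ a * b + a / 2 + b / 2 := by
  obtain ⟨c0, c1, c2, c3⟩ := csum_eq (n / 4)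
  have hk : 1 ≤ n / 4 := by omega
  have hc : n = 4 * (n / 4) ∨ n = 4 * (n / 4) + 1 ∨ n = 4 * (n / 4) + 2 ∨ n = 4 * (n / 4) + 3 := by
    omega
  set k := n / 4 with hkdef
  have hkR : (1 : ℝ) ≤ k := by exact_mod_cast hk
  -- odd case
  have oddcase : ∀ m : ℕ, n = 2 * m + 1 → csum n = 2 * m ^ 2 + 4 * m →
      e ≤ a * b + a / 2 + b / 2 := by
    intro m hm hcs
    have hmR : (1 : ℝ) ≤ m := by
      have : 1 ≤ m := by omega
      exact_mod_cast this
    have hcsR : (csum n : ℝ) = 2 * m ^ 2 + 4 * m := by rw [hcs]; push_cast; ring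
    have hnR : (n : ℝ) = 2 * m + 1 := by rw [hm]; push_cast; ring
    rw [hcsR, hnR] at h3
    rw [hnR] at h4
    have habR : (b : ℝ) = 2 * m + 1 - a := by
      have : (a : ℝ) + b = n := by exact_mod_cast hab
      linarith
    have k1 : ((m : ℝ) + 1 / 2) - (3 / 2) / (2 * m + 1) ≤ l - 1 := by
      have : (0 : ℝ) < 2 * m + 1 := by linarith
      rw [← sub_nonneg] at h3 ⊢
      have e : l - 1 - ((m : ℝ) + 1 / 2 - (3 / 2) / (2 * m + 1)) =
          (l * (2 * m + 1) - (2 * m ^ 2 + 4 * m)) / (2 * m + 1) := by field_simp; ring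
      rw [e]; positivity
    have k2 : ((m : ℝ) + 1 / 2) ^ 2 - 3 / 2 < (l - 1) ^ 2 := by
      have p : (0 : ℝ) < (3 / 2) / (2 * m + 1) := by positivity
      have p1 : (3 / 2) / (2 * (m : ℝ) + 1) ≤ 1 / 2 := by
        rw [div_le_iff₀ (by positivity)]; linarith
      have p2 : ((m : ℝ) + 1 / 2) * ((3 / 2) / (2 * m + 1)) = 3 / 4 := by field_simp; norm_num
      nlinarith
    have k3 : ((a : ℤ) - b) ^ 2 < 6 := by
      have : ((a : ℝ) - b) ^ 2 < 6 := by rw [habR] at h1 ⊢; nlinarith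
      exact_mod_cast this
    have k4 : -3 < (a : ℤ) - b := by nlinarith
    have k5 : (a : ℤ) - b < 3 := by nlinarith
    have k6 : (a : ℝ) * b = m * (m + 1) := by
      have : (a = m ∧ b = m + 1) ∨ (a = m + 1 ∧ b = m) := by omega
      rcases this with ⟨rfl, rfl⟩ | ⟨rfl, rfl⟩ <;> push_cast <;> ring
    have k7 : l - 1 < m + 1 / 2 := by
      rw [k6] at h1
      refine lt_of_pow_lt_pow_left₀ 2 (by linarith) (lt_of_le_of_lt h1 ?_)
      rw [← sub_pos]; ring_nf; norm_num
    have k8 : e ≤ m ^ 2 + 2 * m := by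
      have : (2 * e : ℝ) < 2 * m ^ 2 + 4 * m + 2 := by nlinarith
      have : 2 * e < 2 * m ^ 2 + 4 * m + 2 := by exact_mod_cast this
      omega
    have k9 : a * b = m * (m + 1) := by exact_mod_cast k6
    have k10 : a / 2 + b / 2 = m := by omega
    rw [add_assoc, k9, k10]; nlinarith
  rcases hc with h | h | h | h
  · rw [h, c0, ] at h3
    have hnR : (n : ℝ) = 4 * k := by rw [h]; push_cast; rfl
    rw [hnR] at h4
    push_cast at h3
    have k1 : 2 * (k : ℝ) ≤ l - 1 := by nlinarith
    have habR : (b : ℝ) = 4 * k - a := by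
      have : (a : ℝ) + b = n := by exact_mod_cast hab
      linarith
    have k3 : ((a : ℤ) - b) ^ 2 < 1 := by
      have : ((a : ℝ) - b) ^ 2 < 1 := by rw [habR] at h1 ⊢; nlinarith
      exact_mod_cast this
    have k4 : -1 < (a : ℤ) - b := by nlinarith
    have k5 : (a : ℤ) - b < 1 := by nlinarith
    have ha : a = 2 * k := by omega
    have hb : b = 2 * k := by omega
    rw [ha, hb] at h1 ⊢
    push_cast at h1
    have k6 : l - 1 ≤ 2 * k := by
      refine le_of_pow_le_pow_left₀ (two_ne_zero) (by linarith) ?_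
      linarith
    have : (2 * e : ℝ) ≤ 8 * k ^ 2 + 4 * k := by nlinarith
    have : 2 * e ≤ 8 * k ^ 2 + 4 * k := by exact_mod_cast this
    have q : 2 * k * (2 * k) = 4 * k ^ 2 := by ring
    rw [q]; omega
  · exact oddcase (2 * k) (by omega) (by rw [h, c1]; ring)
  · set m := 2 * k + 1 with hm
    have hmR : (m : ℝ) = 2 * k + 1 := by rw [hm]; push_cast; rfl
    have hmR1 : (3 : ℝ) ≤ m := by linarith
    have hcs : (csum n : ℝ) = 2 * m ^ 2 + 2 * m - 2 := by
      rw [h, c2, hmR]; push_cast; ring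
    have hnR : (n : ℝ) = 2 * m := by rw [h, hmR]; push_cast; ring
    rw [hcs, hnR] at h3
    rw [hnR] at h4
    have habR : (b : ℝ) = 2 * m - a := by
      have : (a : ℝ) + b = n := by exact_mod_cast hab
      linarith
    have k1 : (m : ℝ) - 1 / m ≤ l - 1 := by
      have hp : (0 : ℝ) < m := by linarith
      rw [← sub_nonneg] at h3 ⊢
      have e : l - 1 - ((m : ℝ) - 1 / m) =
          (l * (2 * m) - (2 * m ^ 2 + 2 * m - 2)) / (2 * m) := by field_simp; ring
      rw [e]; positivity
    have k2 : (m : ℝ) ^ 2 - 2 < (l - 1) ^ 2 := by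
      have p : (0 : ℝ) < 1 / m := by positivity
      have p1 : 1 / (m : ℝ) ≤ 1 := by
        rw [div_le_iff₀ (by positivity)]; linarith
      have p2 : (m : ℝ) * (1 / m) = 1 := by field_simp
      nlinarith
    have k3 : ((a : ℤ) - b) ^ 2 < 8 := by
      have : ((a : ℝ) - b) ^ 2 < 8 := by rw [habR] at h1 ⊢; nlinarith
      exact_mod_cast this
    have k4 : -3 < (a : ℤ) - b := by nlinarith
    have k5 : (a : ℤ) - b < 3 := by nlinarith
    have k6 : (a = m ∧ b = m) ∨ (a + 1 = m ∧ b = m + 1) ∨ (a = m + 1 ∧ b + 1 = m) := by omega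
    have k7 : (l - 1) ^ 2 < (m : ℝ) ^ 2 := by
      rcases k6 with ⟨ha, hb⟩ | ⟨ha, hb⟩ | ⟨ha, hb⟩
      · have := h2 (by rw [ha, hm]; exact odd_two_mul_add_one k)
        rw [ha, hb] at this
        nlinarith
      · have ha' : (a : ℝ) = m - 1 := by rw [← ha]; push_cast; ring
        have hb' : (b : ℝ) = m + 1 := by rw [hb]; push_cast; ring
        rw [ha', hb'] at h1; nlinarith
      · have hb' : (b : ℝ) = m - 1 := by rw [← hb]; push_cast; ring
        have ha' : (a : ℝ) = m + 1 := by rw [ha]; push_cast; ring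
        rw [ha', hb'] at h1; nlinarith
    have k8 : l - 1 < m := lt_of_pow_lt_pow_left₀ 2 (by linarith) k7
    have k9 : e + 1 ≤ m ^ 2 + m := by
      have : (2 * e : ℝ) < 2 * m ^ 2 + 2 * m := by nlinarith
      have : 2 * e < 2 * m ^ 2 + 2 * m := by exact_mod_cast this
      omega
    rcases k6 with ⟨ha, hb⟩ | ⟨ha, hb⟩ | ⟨ha, hb⟩
    · rw [ha, hb, ← sq]; omega
    · have q : a * b + 1 = m ^ 2 := by rw [hb, ← ha]; ring
      omega
    · have q : a * b + 1 = m ^ 2 := by rw [ha, ← hb]; ring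
      omega
  · exact oddcase (2 * k + 1) (by omega) (by rw [h, c3]; ring)

/-- For sufficiently large `n`, `SPEX(n, W₅) ⊆ EX(n, W₅)`. -/
theorem spex_subset_ex_W5 :
    ∃ N : ℕ, ∀ n : ℕ, N ≤ n → ∀ G : SimpleGraph (Fin n),
      IsSpexWheel 5 G → IsExWheel 5 G := by
  classical
  refine ⟨10000000000000, fun n hn G hG => ⟨hG.1, fun H hH => ?_⟩⟩
  have hn0 : 0 < n := by omega
  obtain ⟨x, A, hx0, hx, hP⟩ := structure_thm hn hG
  have complete : ∀ u v, ¬ (u ∈ A ↔ v ∈ A) → G.Adj u v := by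
    intro u v huv
    by_contra hna
    refine add_edge hn0 hG x hx0 hx (u := u) (v := v) ?_ hna
      (wheelFree_of_paired (paired_add hP fun h => absurd h huv))
    rintro rfl; exact huv Iff.rfl
  have matched : ∀ u v, (u ∈ A ↔ v ∈ A) → (∀ w, (u ∈ A ↔ w ∈ A) → ¬ G.Adj u w) →
      (∀ w, (v ∈ A ↔ w ∈ A) → ¬ G.Adj v w) → u = v := by
    intro u v huv h1 h2
    by_contra hne
    exact add_edge hn0 hG x hx0 hx hne (h1 v huv)
      (wheelFree_of_paired (paired_add hP fun _ => ⟨h1, h2⟩))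
  have hAc : Aᶜᶜ = A := compl_compl A
  have hcard : A.card + Aᶜ.card = n := by rw [Finset.card_add_card_compl, Fintype.card_fin]
  have s1 := side_count G A (by
    intro u hu v hv h1 h2
    refine matched u v (by simp [hu, hv]) (fun w hw hadj => ?_) (fun w hw hadj => ?_)
    · have : w ∈ A ∩ nb G u := Finset.mem_inter.2 ⟨hw.1 hu, mem_nb.2 hadj⟩
      simp [h1] at this
    · have : w ∈ A ∩ nb G v := Finset.mem_inter.2 ⟨hw.1 hv, mem_nb.2 hadj⟩
      simp [h2] at this)
  have s2 := side_count G Aᶜ (by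
    intro u hu v hv h1 h2
    rw [Finset.mem_compl] at hu hv
    refine matched u v (by simp [hu, hv]) (fun w hw hadj => ?_) (fun w hw hadj => ?_)
    · have : w ∈ Aᶜ ∩ nb G u :=
        Finset.mem_inter.2 ⟨Finset.mem_compl.2 fun h => hu (hw.2 h), mem_nb.2 hadj⟩
      simp [h1] at this
    · have : w ∈ Aᶜ ∩ nb G v :=
        Finset.mem_inter.2 ⟨Finset.mem_compl.2 fun h => hv (hw.2 h), mem_nb.2 hadj⟩
      simp [h2] at this)
  have d1 : ∀ u ∈ A, (A ∩ nb G u).card ≤ 1 := by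
    intro u hu
    rw [Finset.card_le_one]
    intro v hv w hw
    rw [Finset.mem_inter, mem_nb] at hv hw
    exact hP u v w (by simp [hu, hv.1]) (by simp [hu, hw.1]) hv.2 hw.2
  have d2 : ∀ u ∈ Aᶜ, (Aᶜ ∩ nb G u).card ≤ 1 := by
    intro u hu
    rw [Finset.card_le_one]
    intro v hv w hw
    rw [Finset.mem_inter, mem_nb] at hv hw
    rw [Finset.mem_compl] at hu hv hw
    exact hP u v w (by simp [hu, hv.1]) (by simp [hu, hw.1]) hv.2 hw.2
  have hdegs : 2 * (A.card * Aᶜ.card + A.card / 2 + Aᶜ.card / 2) ≤ ∑ v, (nb G v).card := by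
    rw [← Finset.sum_add_sum_compl A]
    have e1 : ∑ v ∈ A, (nb G v).card = ∑ v ∈ A, (A ∩ nb G v).card + A.card * Aᶜ.card := by
      rw [← smul_eq_mul, ← Finset.sum_const, ← Finset.sum_add_distrib]
      refine Finset.sum_congr rfl fun v hv => ?_
      rw [← Finset.card_inter_add_card_sdiff (nb G v) A, Finset.inter_comm]
      congr 2
      ext u
      simp only [Finset.mem_sdiff, mem_nb, Finset.mem_compl]
      exact ⟨fun h => h.2, fun h => ⟨complete v u (by simp [hv, h]), h⟩⟩
    have e2 : ∑ v ∈ Aᶜ, (nb G v).card = ∑ v ∈ Aᶜ, (Aᶜ ∩ nb G v).card + Aᶜ.card * A.card := by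
      rw [← smul_eq_mul, ← Finset.sum_const, ← Finset.sum_add_distrib]
      refine Finset.sum_congr rfl fun v hv => ?_
      rw [← Finset.card_inter_add_card_sdiff (nb G v) Aᶜ, Finset.inter_comm]
      congr 2
      ext u
      rw [Finset.mem_compl] at hv
      simp only [Finset.mem_sdiff, mem_nb, Finset.mem_compl, not_not]
      exact ⟨fun h => h.2, fun h => ⟨complete v u (by simp [hv, h]), h⟩⟩
    rw [e1, e2, mul_comm Aᶜ.card A.card]
    omega
  have hge := spex_ge hn0 hG
  obtain ⟨t1, t2⟩ := side_spec hx0 hx A d1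
  obtain ⟨t3, -⟩ := side_spec hx0 hx Aᶜ d2
  rw [hAc] at t3
  set l := lam1 G with hl
  set SA := ∑ v ∈ A, x v with hSA
  set SB := ∑ v ∈ Aᶜ, x v with hSB
  have hl1 : 0 < l - 1 := by
    have h2 : (n : ℝ) * n ≤ 2 * csum n := by exact_mod_cast csum_ge (by omega : 4 ≤ n)
    have hnR : (10000000000000 : ℝ) ≤ n := by exact_mod_cast hn
    have : (n : ℝ) * n ≤ 2 * l * n := by linarith
    have := le_of_mul_le_mul_right this (by linarith)
    linarith
  have hSA0 : 0 ≤ SA := Finset.sum_nonneg fun i _ => (hx0 i).le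
  have hSB0 : 0 ≤ SB := Finset.sum_nonneg fun i _ => (hx0 i).le
  have hsum : 0 < SA + SB := by
    rw [hSA, hSB, Finset.sum_add_sum_compl]
    exact Finset.sum_pos (fun i _ => hx0 i) ⟨⟨0, hn0⟩, Finset.mem_univ _⟩
  have ha0 : (0 : ℝ) ≤ A.card := Nat.cast_nonneg _
  have hb0 : (0 : ℝ) ≤ Aᶜ.card := Nat.cast_nonneg _
  have u1 : (l - 1) ^ 2 ≤ A.card * Aᶜ.card := by
    have w1 : (l - 1) ^ 2 * SA ≤ A.card * Aᶜ.card * SA := by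
      have := mul_le_mul_of_nonneg_left t1 hl1.le
      have := mul_le_mul_of_nonneg_left t3 ha0
      linarith
    have w2 : (l - 1) ^ 2 * SB ≤ A.card * Aᶜ.card * SB := by
      have := mul_le_mul_of_nonneg_left t3 hl1.le
      have := mul_le_mul_of_nonneg_left t1 hb0
      linarith
    refine le_of_mul_le_mul_right ?_ hsum
    linarith
  have u2 : Odd A.card → (l - 1) ^ 2 < A.card * Aᶜ.card := by
    intro hodd
    have w1 : (l - 1) ^ 2 * SA < A.card * Aᶜ.card * SA := by
      have := mul_lt_mul_of_pos_left (t2 hodd) hl1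
      have := mul_le_mul_of_nonneg_left t3 ha0
      linarith
    exact lt_of_mul_lt_mul_right w1 hSA0
  have hH : 2 * (edgeCount H : ℝ) ≤ l * n := by
    have h1 := edge_le hn0 H
    rw [← edgeCount_eq] at h1
    push_cast at h1
    have h2 := mul_le_mul_of_nonneg_right (hG.2 H hH) (Nat.cast_nonneg (α := ℝ) n)
    linarith
  have fin := arith (by omega) hcard u1 u2 hge hH
  have := edgeCount_eq G
  omega
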